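/- (Lemma 4) Fix vehicle length l > 0, uncertainty parameter σₒ > 0, positive constants T, L, τ, a speed v > 0 and a capacity requirement ŝ > 0. If the set {η > 0 : s(v,η) ≥ ŝ} is nonempty, then it has a greatest element η^r, and η^r minimizes the collision probability over that set: p(v,η^r) ≤ p(v,η) for every η > 0 with s(v,η) ≥ ŝ. -/

import Mathlib

open MeasureTheory Real Filter Set

/-- The standard Gaussian probability density function. -/
noncomputable def stdGaussianPDF (x : ℝ) : ℝ :=
  (Real.sqrt (2 * Real.pi))⁻¹ * Real.exp (-x ^ 2 / 2)

/-- The standard Gaussian cumulative distribution function Φ. -/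
noncomputable def stdGaussianCDF (x : ℝ) : ℝ :=
  ∫ t in Set.Iic x, stdGaussianPDF t

/-- The per-time-step collision probability p(v,η) = Φ((l − v·η)/(v·σₒ·√η)). -/
noncomputable def collisionProb (l σₒ v η : ℝ) : ℝ :=
  stdGaussianCDF ((l - v * η) / (v * σₒ * Real.sqrt η))

/-- The collision-inclusive capacity s(v,η) = 1/(η + (T·L)/(τ·v)·p(v,η)). -/
noncomputable def cic (l σₒ T L τ v η : ℝ) : ℝ :=
  1 / (η + (T * L) / (τ * v) * collisionProb l σₒ v η)


lemma stdPDF_nonneg (x : ℝ) : 0 ≤ stdGaussianPDF x := by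
  unfold stdGaussianPDF; positivity

lemma stdPDF_cont : Continuous stdGaussianPDF := by
  unfold stdGaussianPDF; fun_prop

lemma stdPDF_int : Integrable stdGaussianPDF := by
  have h := (integrable_exp_neg_mul_sq (b := 1 / 2) (by norm_num)).const_mul
    ((Real.sqrt (2 * Real.pi))⁻¹)
  refine h.congr (Eventually.of_forall fun x => ?_)
  simp only [stdGaussianPDF]
  congr 2
  ring

lemma stdCDF_nonneg (x : ℝ) : 0 ≤ stdGaussianCDF x :=
  integral_nonneg fun t => stdPDF_nonneg t

lemma stdCDF_mono : Monotone stdGaussianCDF := by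
  intro a b hab
  exact setIntegral_mono_set stdPDF_int.integrableOn
    (Eventually.of_forall fun t => stdPDF_nonneg t)
    (Set.Iic_subset_Iic.2 hab).eventuallyLE

lemma stdCDF_cont : Continuous stdGaussianCDF := by
  have h : stdGaussianCDF = fun x => stdGaussianCDF 0 + ∫ t in (0:ℝ)..x, stdGaussianPDF t := by
    funext x
    have := intervalIntegral.integral_Iic_sub_Iic (f := stdGaussianPDF) (μ := volume)
      (a := 0) (b := x) stdPDF_int.integrableOn stdPDF_int.integrableOn
    rw [← this]
    simp [stdGaussianCDF]
  rw [h]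
  exact continuous_const.add
    (intervalIntegral.continuous_primitive (fun a b => stdPDF_cont.intervalIntegrable a b) 0)

lemma collisionProb_anti (l σₒ v a b : ℝ) (hl : 0 < l) (hσ : 0 < σₒ) (hv : 0 < v)
    (ha : 0 < a) (hab : a ≤ b) : collisionProb l σₒ v b ≤ collisionProb l σₒ v a := by
  apply stdCDF_mono
  have key : ∀ x : ℝ, 0 < x → (l - v * x) / (v * σₒ * Real.sqrt x)
      = l / (v * σₒ) / Real.sqrt x - Real.sqrt x / σₒ := by
    intro x hx
    have h1 : 0 < Real.sqrt x := Real.sqrt_pos.2 hx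
    have h2 : Real.sqrt x ^ 2 = x := Real.sq_sqrt hx.le
    field_simp
    rw [h2]
  rw [key a ha, key b (ha.trans_le hab)]
  have h1 : 0 < Real.sqrt a := Real.sqrt_pos.2 ha
  have h2 : Real.sqrt a ≤ Real.sqrt b := Real.sqrt_le_sqrt hab
  gcongr

lemma collisionProb_contOn (l σₒ v : ℝ) (hσ : 0 < σₒ) (hv : 0 < v) :
    ContinuousOn (collisionProb l σₒ v) (Set.Ioi 0) := by
  refine stdCDF_cont.comp_continuousOn (ContinuousOn.div (by fun_prop) (by fun_prop) ?_)
  intro x hx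
  have h1 : 0 < Real.sqrt x := Real.sqrt_pos.2 hx
  positivity

lemma cic_iff (l σₒ T L τ v shat η : ℝ)
    (hT : 0 < T) (hL : 0 < L) (hτ : 0 < τ)
    (hv : 0 < v) (hshat : 0 < shat) (hη : 0 < η) :
    shat ≤ cic l σₒ T L τ v η ↔
      η + (T * L) / (τ * v) * collisionProb l σₒ v η ≤ 1 / shat := by
  have hp : 0 ≤ collisionProb l σₒ v η := stdCDF_nonneg _
  have : 0 < η + (T * L) / (τ * v) * collisionProb l σₒ v η := by positivity
  unfold cic
  exact le_one_div hshat this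

/-- Lemma 4: if the feasible set {η > 0 : s(v,η) ≥ ŝ} is
nonempty, it has a greatest element ηr, and ηr minimizes the collision
probability over that set. -/
theorem feasible_set_greatest_minimizes_collisionProb (l σₒ T L τ v shat : ℝ)
    (hl : 0 < l) (hσ : 0 < σₒ) (hT : 0 < T) (hL : 0 < L) (hτ : 0 < τ)
    (hv : 0 < v) (hshat : 0 < shat)
    (hne : {η : ℝ | 0 < η ∧ shat ≤ cic l σₒ T L τ v η}.Nonempty) :
    ∃ ηr, (0 < ηr ∧ shat ≤ cic l σₒ T L τ v ηr) ∧
      (∀ η, 0 < η → shat ≤ cic l σₒ T L τ v η → η ≤ ηr) ∧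
      (∀ η, 0 < η → shat ≤ cic l σₒ T L τ v η →
        collisionProb l σₒ v ηr ≤ collisionProb l σₒ v η) := by
  obtain ⟨η₀, h0, h0s⟩ := hne
  have hiff := fun η hη => cic_iff l σₒ T L τ v shat η hT hL hτ hv hshat hη
  set f : ℝ → ℝ := fun η => η + (T * L) / (τ * v) * collisionProb l σₒ v η with hf
  have hle : ∀ η, 0 < η → shat ≤ cic l σₒ T L τ v η → η ≤ 1 / shat := by
    intro η hη h
    have hp : 0 ≤ collisionProb l σₒ v η := stdCDF_nonneg _
    have h2 : 0 ≤ (T * L) / (τ * v) * collisionProb l σₒ v η := by positivity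
    linarith [(hiff η hη).1 h]
  have hc : ContinuousOn f (Set.Icc η₀ (1 / shat)) :=
    continuousOn_id.add (continuousOn_const.mul
      ((collisionProb_contOn l σₒ v hσ hv).mono fun x hx => h0.trans_le hx.1))
  have hK : IsCompact (Set.Icc η₀ (1 / shat) ∩ f ⁻¹' Set.Iic (1 / shat)) :=
    isCompact_Icc.of_isClosed_subset
      (hc.preimage_isClosed_of_isClosed isClosed_Icc isClosed_Iic) Set.inter_subset_left
  obtain ⟨r, hr, hmax⟩ := hK.exists_isGreatest
    ⟨η₀, ⟨le_rfl, hle _ h0 h0s⟩, (hiff _ h0).1 h0s⟩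
  have hr0 : 0 < r := h0.trans_le hr.1.1
  have hgr : ∀ η, 0 < η → shat ≤ cic l σₒ T L τ v η → η ≤ r := by
    intro η hη h
    rcases le_total η η₀ with h' | h'
    · exact h'.trans hr.1.1
    · exact hmax ⟨⟨h', hle _ hη h⟩, (hiff _ hη).1 h⟩
  exact ⟨r, ⟨hr0, (hiff _ hr0).2 hr.2⟩, hgr, fun η hη h =>
    collisionProb_anti l σₒ v η r hl hσ hv hη (hgr η hη h)⟩
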